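/- arXiv:2504.17284 — 2 statements merged into one kernel-verified Lean document; each statement's English description precedes it below -/
import Mathlib

section
/- For x > 0 on the positive real axis (or more generally x ∈ ℂ \ (-∞,0]), the Ramanujan period function satisfies the five-term Hecke relation 2𝓕₁(x) - 𝓕₁(2x) - (1/2)𝓕₁(x/2) - (1/2)𝓕₁((x+1)/2) - (1/(x+1))·𝓕₁(2x/(x+1)) = 0. -/
open MeasureTheory Set

noncomputable def digammaC (x : ℂ) : ℂ := deriv Complex.Gamma x / Complex.Gamma x

/-- `𝓢₁(x) = ∑ (ψ(nx) - log(nx) + 1/(2nx))`. -/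
noncomputable def S1 (x : ℂ) : ℂ :=
  ∑' n : ℕ, (digammaC ((n + 1) * x) - Complex.log ((n + 1) * x) + 1 / (2 * (n + 1) * x))

/-- The Ramanujan period function `𝓕₁`. -/
noncomputable def F1 (x : ℂ) : ℂ :=
  S1 x - (1 / 2) * ((Real.eulerMascheroniConstant : ℂ) - Complex.log (2 * Real.pi / x))

open Filter Topology

/-- The trapezoid error of `1/u` on `[z, z+1]`. -/
noncomputable def kC (z : ℂ) : ℂ :=
  Complex.log (z + 1) - Complex.log z - (1 / z + 1 / (z + 1)) / 2

lemma cone_mem {x : ℂ} (hx : x ∈ Complex.slitPlane) {a b : ℝ} (ha : 0 < a) (hb : 0 ≤ b) :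
    (a : ℂ) * x + b ∈ Complex.slitPlane := by
  rw [Complex.mem_slitPlane_iff] at hx ⊢
  by_cases him : x.im = 0
  · left
    have : 0 < x.re := by tauto
    simp
    positivity
  · right
    simp [him, ha.ne']

lemma cone_bound {x₀ : ℂ} (hx : x₀ ∈ Complex.slitPlane) :
    ∃ ε > 0, Metric.ball x₀ ε ⊆ Complex.slitPlane ∧ ∃ c > 0, ∀ x ∈ Metric.ball x₀ ε,
      ∀ a b : ℝ, 0 < a → 0 ≤ b → c * (a + b) ≤ ‖(a : ℂ) * x + b‖ := by
  obtain ⟨ε, hε, hsub⟩ := Metric.nhds_basis_closedBall.mem_iff.1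
    (Complex.isOpen_slitPlane.mem_nhds hx)
  refine ⟨ε, hε, Metric.ball_subset_closedBall.trans hsub, ?_⟩
  let K : Set (ℂ × ℝ) := Metric.closedBall x₀ ε ×ˢ Set.Icc 0 1
  have hK : IsCompact K := (isCompact_closedBall _ _).prod isCompact_Icc
  have hKne : K.Nonempty := ⟨(x₀, 0), by simp [K, hε.le]⟩
  obtain ⟨p, hp, hmin⟩ := hK.exists_isMinOn hKne
    (f := fun q : ℂ × ℝ => ‖(q.2 : ℂ) * q.1 + (1 - q.2 : ℝ)‖) (by fun_prop)
  have hpos : ∀ q ∈ K, 0 < ‖(q.2 : ℂ) * q.1 + (1 - q.2 : ℝ)‖ := by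
    intro q hq
    obtain ⟨h1, h2, h3⟩ := hq
    rw [norm_pos_iff]
    rcases h2.eq_or_lt with h | h
    · simp [← h]
    · exact Complex.slitPlane_ne_zero (cone_mem (hsub h1) h (by linarith))
  refine ⟨_, hpos p hp, fun x hx a b ha hb => ?_⟩
  have hab : 0 < a + b := by linarith
  have hq : (x, a / (a + b)) ∈ K := by
    refine ⟨Metric.ball_subset_closedBall hx, by positivity, ?_⟩
    rw [div_le_one hab]; linarith
  have := hmin hq
  simp only [Set.mem_ofPred_eq] at this
  have e : (a : ℂ) * x + b = ((a + b : ℝ) : ℂ) * (((a / (a + b) : ℝ) : ℂ) * x + (1 - a / (a + b) : ℝ)) := by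
    have : ((a : ℂ) + b) ≠ 0 := by exact_mod_cast hab.ne'
    push_cast
    field_simp
    ring
  rw [e, norm_mul, Complex.norm_real, Real.norm_of_nonneg hab.le, mul_comm]
  exact mul_le_mul_of_nonneg_left this hab.le

lemma slit_add {z : ℂ} (hz : z ∈ Complex.slitPlane) {s : ℝ} (hs : 0 ≤ s) :
    z + s ∈ Complex.slitPlane := by
  simpa using cone_mem hz one_pos hs

lemma kC_bound {z : ℂ} (hz : z ∈ Complex.slitPlane) {r : ℝ} (hr : 0 < r)
    (h : ∀ s : ℝ, 0 ≤ s → r ≤ ‖z + s‖) : ‖kC z‖ ≤ 1 / (2 * r ^ 3) := by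
  let f : ℝ → ℂ := fun s => Complex.log (z + s) - Complex.log z - (s : ℂ) / 2 * (1 / z + (z + s)⁻¹)
  let f' : ℝ → ℂ := fun s => - (s : ℂ) ^ 2 / (2 * z * (z + s) ^ 2)
  have hz0 := Complex.slitPlane_ne_zero hz
  have hd : ∀ s ∈ Set.Icc (0 : ℝ) 1, HasDerivWithinAt f (f' s) (Set.Icc 0 1) s := by
    intro s hs
    have hzs := slit_add hz hs.1
    have hzs0 := Complex.slitPlane_ne_zero hzs
    have h1 : HasDerivAt (fun s : ℝ => z + (s : ℂ)) 1 s :=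
      (Complex.ofRealCLM.hasDerivAt (x := s)).const_add z
    have h0 : HasDerivAt (fun s : ℝ => (s : ℂ)) 1 s := Complex.ofRealCLM.hasDerivAt (x := s)
    have h2 := h1.clog_real hzs
    have h3 := h1.inv hzs0
    have h4 := (h2.sub_const (Complex.log z)).sub ((h0.div_const 2).mul (h3.const_add (1 / z)))
    have h5 : HasDerivAt f (f' s) s := by
      refine HasDerivAt.congr_deriv (f' := _) (show HasDerivAt f _ s from h4) ?_
      simp only [f', Pi.inv_apply]
      field_simp
      ring
    exact h5.hasDerivWithinAt
  have hb : ∀ s ∈ Set.Ico (0 : ℝ) 1, ‖f' s‖ ≤ 1 / (2 * r ^ 3) := by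
    intro s hs
    have h1 : r ≤ ‖z‖ := by simpa using h 0 le_rfl
    have h2 := h s hs.1
    simp only [f', norm_div, norm_neg, norm_pow, norm_mul, Complex.norm_real, Complex.norm_two]
    rw [Real.norm_of_nonneg hs.1]
    have : s ^ 2 ≤ 1 := by nlinarith [hs.1, hs.2]
    have : 2 * r ^ 3 ≤ 2 * ‖z‖ * ‖z + s‖ ^ 2 := by
      calc 2 * r ^ 3 = 2 * r * r ^ 2 := by ring
        _ ≤ _ := by gcongr
    gcongr
  have := norm_image_sub_le_of_norm_deriv_le_segment' hd hb 1 (by simp)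
  simpa [f, kC, mul_comm, div_eq_mul_inv] using this

lemma summable_a : Summable (fun n : ℕ => 1 / ((n : ℝ) + 1) ^ (3 / 2 : ℝ)) := by
  have := (summable_nat_add_iff 1).2 ((Real.summable_one_div_nat_rpow (p := 3 / 2)).2 (by norm_num))
  simpa using this

lemma u_le (n m : ℕ) : 1 / (((n : ℝ) + 1) + m) ^ 3 ≤
    1 / ((n : ℝ) + 1) ^ (3 / 2 : ℝ) * (1 / ((m : ℝ) + 1) ^ (3 / 2 : ℝ)) := by
  rw [one_div_mul_one_div]
  apply one_div_le_one_div_of_le (by positivity)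
  rw [← Real.mul_rpow (by positivity) (by positivity)]
  have hm : ((n : ℝ) + 1) * (m + 1) ≤ (((n : ℝ) + 1) + m) ^ 2 := by
    have h1 : (0 : ℝ) ≤ n := by positivity
    have h2 : (0 : ℝ) ≤ m := by positivity
    nlinarith [mul_nonneg h1 h2]
  calc _ ≤ ((((n : ℝ) + 1) + m) ^ 2) ^ (3 / 2 : ℝ) := by gcongr
    _ = _ := by
      rw [← Real.rpow_natCast, ← Real.rpow_mul (by positivity), ← Real.rpow_natCast]; norm_num

lemma summable_u : Summable (fun p : ℕ × ℕ => 1 / (((p.1 : ℝ) + 1) + p.2) ^ 3) := by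
  have h2 := summable_a.mul_of_nonneg summable_a (fun n => by positivity) (fun n => by positivity)
  exact Summable.of_nonneg_of_le (fun p => by positivity) (fun p => u_le p.1 p.2) h2

lemma kC_cone {x₀ : ℂ} (hx : x₀ ∈ Complex.slitPlane) :
    ∃ ε > 0, Metric.ball x₀ ε ⊆ Complex.slitPlane ∧ ∃ C : ℝ, ∀ p : ℕ × ℕ, ∀ x ∈ Metric.ball x₀ ε,
      ‖kC (((p.1 : ℂ) + 1) * x + p.2)‖ ≤ C * (1 / (((p.1 : ℝ) + 1) + p.2) ^ 3) := by
  obtain ⟨ε, hε, hs, c, hc, h⟩ := cone_bound hx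
  refine ⟨ε, hε, hs, 1 / (2 * c ^ 3), fun p x hx => ?_⟩
  have hm : ((p.1 : ℂ) + 1) * x + p.2 ∈ Complex.slitPlane := by
    have := cone_mem (hs hx) (a := p.1 + 1) (b := p.2) (by positivity) (by positivity)
    simpa using this
  have := kC_bound hm (r := c * ((p.1 + 1) + p.2)) (by positivity) (fun s hs => ?_)
  · refine this.trans (le_of_eq ?_)
    rw [mul_pow]
    field_simp
  · have := h x hx (p.1 + 1) (p.2 + s) (by positivity) (by positivity)
    push_cast at this
    rw [add_assoc (((p.1 : ℂ) + 1) * x)]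
    refine le_trans ?_ this
    gcongr
    linarith

noncomputable def T (x : ℂ) : ℂ := ∑' p : ℕ × ℕ, kC (((p.1 : ℂ) + 1) * x + p.2)

lemma kC_summable {x : ℂ} (hx : x ∈ Complex.slitPlane) :
    Summable (fun p : ℕ × ℕ => kC (((p.1 : ℂ) + 1) * x + p.2)) := by
  obtain ⟨ε, hε, hs, C, h⟩ := kC_cone hx
  exact Summable.of_norm_bounded (summable_u.mul_left C) (fun p => h p x (Metric.mem_ball_self hε))

lemma kC_diff {z : ℂ} (hz : z ∈ Complex.slitPlane) : DifferentiableAt ℂ kC z := by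
  have h1 : z + 1 ∈ Complex.slitPlane := by simpa using slit_add hz zero_le_one
  have h2 := Complex.slitPlane_ne_zero hz
  have h3 := Complex.slitPlane_ne_zero h1
  unfold kC
  fun_prop (disch := assumption)

lemma T_diff : DifferentiableOn ℂ T Complex.slitPlane := by
  intro x hx
  obtain ⟨ε, hε, hs, C, h⟩ := kC_cone hx
  have := Complex.differentiableOn_tsum_of_summable_norm (summable_u.mul_left C)
    (F := fun (p : ℕ × ℕ) (x : ℂ) => kC (((p.1 : ℂ) + 1) * x + p.2)) (U := Metric.ball x ε) (fun p y hy => ?_)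
    Metric.isOpen_ball h
  · have h3 : DifferentiableOn ℂ T (Metric.ball x ε) := this
    exact (h3.differentiableAt (Metric.ball_mem_nhds x hε)).differentiableWithinAt
  · have hm : ((p.1 : ℂ) + 1) * y + p.2 ∈ Complex.slitPlane := by
      have := cone_mem (hs hy) (a := p.1 + 1) (b := p.2) (by positivity) (by positivity)
      simpa using this
    have h1 := kC_diff hm
    have h2 : DifferentiableAt ℂ (fun y : ℂ => ((p.1 : ℂ) + 1) * y + p.2) y := by fun_prop
    have h3 := DifferentiableAt.comp (g := kC) (f := fun y : ℂ => ((p.1 : ℂ) + 1) * y + p.2) y h1 h2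
    exact h3.differentiableWithinAt

noncomputable def gC (y : ℂ) : ℂ := digammaC y - Complex.log y + 1 / (2 * y)

lemma slit_ne_neg {y : ℂ} (hy : y ∈ Complex.slitPlane) (m : ℕ) : y ≠ -m := by
  rintro rfl
  rw [Complex.mem_slitPlane_iff] at hy
  simp at hy
  have : (0 : ℝ) ≤ m := by positivity
  linarith

lemma digammaC_eq : digammaC = Complex.digamma := by
  ext x; simp [digammaC, Complex.digamma, logDeriv_apply]

lemma gC_step {y : ℂ} (hy : y ∈ Complex.slitPlane) : gC y - gC (y + 1) = kC y := by
  have h1 : y + 1 ∈ Complex.slitPlane := by simpa using slit_add hy zero_le_one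
  have h2 := Complex.slitPlane_ne_zero hy
  have h3 := Complex.slitPlane_ne_zero h1
  simp only [gC, kC, digammaC_eq]
  rw [Complex.digamma_apply_add_one y (slit_ne_neg hy)]
  field_simp
  ring

lemma gC_tele {y : ℂ} (hy : y ∈ Complex.slitPlane) (M : ℕ) :
    ∑ m ∈ Finset.range M, kC (y + m) = gC y - gC (y + M) := by
  induction M with
  | zero => simp
  | succ M ih =>
    have h1 : y + M ∈ Complex.slitPlane := by
      simpa using slit_add hy (s := M) (by positivity)
    rw [Finset.sum_range_succ, ih, ← gC_step h1]
    push_cast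
    rw [add_assoc]
    ring

lemma digammaC_real {y : ℝ} (hy : 0 < y) :
    digammaC (y : ℂ) = ((deriv (Real.log ∘ Real.Gamma) y : ℝ) : ℂ) := by
  have hd : DifferentiableAt ℝ Real.Gamma y :=
    Real.differentiableAt_Gamma (fun m => ne_of_gt (by have : (0:ℝ) ≤ m := by positivity
                                                       linarith))
  have hslit : (y : ℂ) ∈ Complex.slitPlane := by simp [hy]
  have h1 : HasDerivAt (fun x : ℝ => Complex.Gamma (x : ℂ)) (deriv Complex.Gamma y) y :=
    (Complex.differentiableAt_Gamma _ (slit_ne_neg hslit)).hasDerivAt.comp_ofReal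
  have h2 := hd.hasDerivAt.ofReal_comp
  simp only [Complex.Gamma_ofReal] at h1
  have h3 := h1.unique h2
  rw [Function.comp_def, deriv.log hd (Real.Gamma_pos_of_pos hy).ne', digammaC, h3,
    Complex.Gamma_ofReal]
  push_cast
  rfl

lemma psi_bounds {y : ℝ} (hy : 0 < y) : Real.log y - 1 / y ≤ deriv (Real.log ∘ Real.Gamma) y ∧
    deriv (Real.log ∘ Real.Gamma) y ≤ Real.log y := by
  set f := Real.log ∘ Real.Gamma
  have hc : ConvexOn ℝ (Ioi 0) f := Real.convexOn_log_Gamma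
  have h_rec (x : ℝ) (hx : 0 < x) : f (x + 1) = f x + Real.log x := by
    simp only [f, Function.comp_apply,
      Real.Gamma_add_one hx.ne', Real.log_mul hx.ne' (Real.Gamma_pos_of_pos hx).ne', add_comm]
  have hder {x : ℝ} (hx : 0 < x) : DifferentiableAt ℝ f x := by
    refine ((Real.differentiableAt_Gamma ?_).log (Real.Gamma_ne_zero ?_)) <;>
    exact fun m ↦ ne_of_gt (by have : (0:ℝ) ≤ m := by positivity
                               linarith)
  have hder_rec (x : ℝ) (hx : 0 < x) : deriv f (x + 1) = deriv f x + 1 / x := by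
    rw [← deriv_comp_add_const, one_div, ← Real.deriv_log,
      ← deriv_add (hder <| by positivity) (Real.differentiableAt_log hx.ne')]
    apply EventuallyEq.deriv_eq
    filter_upwards [eventually_gt_nhds hx] using h_rec
  constructor
  · have := hc.slope_le_deriv (x := y) (y := y + 1) hy (show (0:ℝ) < y + 1 by linarith) (by linarith)
      (hder <| by positivity)
    rw [slope_def_field, show y + 1 - y = (1 : ℝ) by ring, div_one, h_rec y hy,
      add_sub_cancel_left, hder_rec y hy] at this
    linarith
  · have := hc.deriv_le_slope (x := y) (y := y + 1) hy (show (0:ℝ) < y + 1 by linarith) (by linarith)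
      (hder <| by positivity)
    rw [slope_def_field, show y + 1 - y = (1 : ℝ) by ring, div_one, h_rec y hy,
      add_sub_cancel_left] at this
    exact this

lemma gC_real_bound {y : ℝ} (hy : 0 < y) : ‖gC (y : ℂ)‖ ≤ 1 / y := by
  have e : gC (y : ℂ) = ((deriv (Real.log ∘ Real.Gamma) y - Real.log y + 1 / (2 * y) : ℝ) : ℂ) := by
    rw [gC, digammaC_real hy, ← Complex.ofReal_log hy.le]
    push_cast
    rfl
  obtain ⟨h1, h2⟩ := psi_bounds hy
  rw [e, Complex.norm_real, Real.norm_eq_abs, abs_le]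
  have : 1 / (2 * y) = (1 / y) / 2 := by field_simp
  have : 0 < 1 / y := by positivity
  constructor <;> linarith

lemma gC_tendsto {y : ℝ} (hy : 0 < y) :
    Tendsto (fun M : ℕ => gC ((y : ℂ) + M)) atTop (𝓝 0) := by
  apply squeeze_zero_norm (a := fun M : ℕ => 1 / (y + M))
  · intro M
    have := gC_real_bound (y := y + M) (by positivity)
    push_cast at this
    exact this
  · simp only [one_div]
    exact (tendsto_atTop_add_const_left atTop y tendsto_natCast_atTop_atTop).inv_tendsto_atTop

lemma kC_summable_row {y : ℂ} (hy : y ∈ Complex.slitPlane) : Summable (fun m : ℕ => kC (y + m)) := by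
  have := (kC_summable hy).comp_injective (i := fun m : ℕ => ((0 : ℕ), m))
    (fun a b h => by simpa using h)
  simpa [Function.comp_def] using this

lemma G_diff : DifferentiableOn ℂ (fun y => ∑' m : ℕ, kC (y + m)) Complex.slitPlane := by
  intro x hx
  obtain ⟨ε, hε, hs, C, h⟩ := kC_cone hx
  have hu : Summable (fun m : ℕ => C * (1 / ((((0 : ℕ) : ℝ) + 1) + (m : ℝ)) ^ 3)) := by
    have := summable_u.comp_injective (i := fun m : ℕ => ((0 : ℕ), m))
      (fun a b h => by simpa using h)
    exact this.mul_left C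
  have := Complex.differentiableOn_tsum_of_summable_norm hu
    (F := fun (m : ℕ) (x : ℂ) => kC (x + m)) (U := Metric.ball x ε) (fun m y hy => ?_)
    Metric.isOpen_ball (fun m y hy => by simpa using h (0, m) y hy)
  · exact (this.differentiableAt (Metric.ball_mem_nhds x hε)).differentiableWithinAt
  · have hm : y + m ∈ Complex.slitPlane := by
      simpa using slit_add (hs hy) (s := m) (by positivity)
    have h1 := kC_diff hm
    have h2 : DifferentiableAt ℂ (fun y : ℂ => y + m) y := by fun_prop
    have h3 := DifferentiableAt.comp (g := kC) (f := fun y : ℂ => y + m) y h1 h2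
    exact h3.differentiableWithinAt

lemma gC_diff : DifferentiableOn ℂ gC Complex.slitPlane := by
  have hG : DifferentiableOn ℂ Complex.Gamma Complex.slitPlane := fun z hz =>
    (Complex.differentiableAt_Gamma _ (slit_ne_neg hz)).differentiableWithinAt
  have hG' := hG.deriv Complex.isOpen_slitPlane
  intro z hz
  have h1 := (hG' z hz).div (hG z hz) (Complex.Gamma_ne_zero (slit_ne_neg hz))
  have h0 := Complex.slitPlane_ne_zero hz
  have h2 : DifferentiableWithinAt ℂ (fun z : ℂ => Complex.log z) Complex.slitPlane z :=
    (Complex.differentiableAt_log hz).differentiableWithinAt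
  have h3 : DifferentiableWithinAt ℂ (fun z : ℂ => 1 / (2 * z)) Complex.slitPlane z := by
    have : 2 * z ≠ 0 := by simpa using h0
    fun_prop (disch := assumption)
  exact (h1.sub h2).add h3

lemma slit_identity {f g : ℂ → ℂ} (hf : DifferentiableOn ℂ f Complex.slitPlane)
    (hg : DifferentiableOn ℂ g Complex.slitPlane) (h : ∀ y : ℝ, 0 < y → f y = g y) :
    EqOn f g Complex.slitPlane := by
  have h1 := hf.analyticOnNhd Complex.isOpen_slitPlane
  have h2 := hg.analyticOnNhd Complex.isOpen_slitPlane
  have hconn : IsPreconnected Complex.slitPlane :=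
    (Complex.starConvex_one_slitPlane.isPathConnected (by simp)).isConnected.isPreconnected
  refine h1.eqOn_of_preconnected_of_frequently_eq h2 hconn (z₀ := 1) (by simp) ?_
  have ht : Tendsto (fun n : ℕ => (((1 + 1 / ((n : ℝ) + 1) : ℝ)) : ℂ)) atTop (𝓝[≠] 1) := by
    refine tendsto_nhdsWithin_iff.2 ⟨?_, ?_⟩
    · have := (tendsto_one_div_add_atTop_nhds_zero_nat (𝕜 := ℝ)).const_add 1
      have h3 := (Complex.continuous_ofReal.tendsto _).comp this
      simpa [Function.comp_def] using h3
    · refine Eventually.of_forall (fun n => ?_)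
      have : (0 : ℝ) < 1 / ((n : ℝ) + 1) := by positivity
      simp only [mem_compl_iff, mem_singleton_iff]
      intro h
      have h' : (1 + 1 / ((n : ℝ) + 1) : ℝ) = 1 := by exact_mod_cast h
      linarith
  exact ht.frequently (Frequently.of_forall (fun n => h _ (by positivity)))

lemma gC_eq {y : ℂ} (hy : y ∈ Complex.slitPlane) : gC y = ∑' m : ℕ, kC (y + m) := by
  refine slit_identity gC_diff G_diff (fun y hy => ?_) hy
  have hslit : (y : ℂ) ∈ Complex.slitPlane := by simp [hy]
  have h1 := (kC_summable_row hslit).hasSum.tendsto_sum_nat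
  have h2 : Tendsto (fun M : ℕ => gC y - gC ((y : ℂ) + M)) atTop (𝓝 (gC y - 0)) :=
    (gC_tendsto hy).const_sub _
  simp_rw [gC_tele hslit] at h1
  rw [sub_zero] at h2
  exact tendsto_nhds_unique h2 h1

lemma S1_eq {x : ℂ} (hx : x ∈ Complex.slitPlane) : S1 x = T x := by
  rw [T, (kC_summable hx).tsum_prod, S1]
  congr 1
  ext n
  have h1 : ((n : ℂ) + 1) * x ∈ Complex.slitPlane := by
    have := cone_mem hx (a := n + 1) (b := 0) (by positivity) le_rfl
    simpa using this
  rw [← gC_eq h1, gC]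
  ring_nf

lemma gC_nat_bound : ∃ C : ℝ, ∀ n : ℕ, ‖gC ((n : ℂ) + 1)‖ ≤ C * (1 / ((n : ℝ) + 1) ^ (3 / 2 : ℝ)) := by
  obtain ⟨ε, hε, hs, C, h⟩ := kC_cone (x₀ := 1) (by simp)
  have hC : 0 ≤ C := by
    have := (norm_nonneg _).trans (h (0, 0) 1 (Metric.mem_ball_self hε))
    simpa using this
  refine ⟨C * ∑' m : ℕ, 1 / ((m : ℝ) + 1) ^ (3 / 2 : ℝ), fun n => ?_⟩
  have h1 : (n : ℂ) + 1 ∈ Complex.slitPlane := by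
    have := cone_mem (x := 1) (by simp) (a := n + 1) (b := 0) (by positivity) le_rfl
    simpa using this
  rw [gC_eq h1]
  have hb : HasSum (fun m : ℕ => C * (1 / ((n : ℝ) + 1) ^ (3 / 2 : ℝ) * (1 / ((m : ℝ) + 1) ^ (3 / 2 : ℝ))))
      (C * (1 / ((n : ℝ) + 1) ^ (3 / 2 : ℝ) * ∑' m : ℕ, 1 / ((m : ℝ) + 1) ^ (3 / 2 : ℝ))) :=
    (summable_a.hasSum.mul_left _).mul_left _
  refine (tsum_of_norm_bounded hb (fun m => ?_)).trans (le_of_eq (by ring))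
  have := h (n, m) 1 (Metric.mem_ball_self hε)
  simp only [mul_one] at this
  exact this.trans (mul_le_mul_of_nonneg_left (u_le n m) hC)

lemma gC_nat (n : ℕ) : gC ((n : ℂ) + 1) =
    ((harmonic n - Real.eulerMascheroniConstant - Real.log (n + 1) + 1 / (2 * (n + 1)) : ℝ) : ℂ) := by
  have h : digammaC ((n : ℂ) + 1) = -Real.eulerMascheroniConstant + harmonic n := by
    rw [digammaC, Complex.deriv_Gamma_nat, Complex.Gamma_nat_eq_factorial]
    have : (n.factorial : ℂ) ≠ 0 := by exact_mod_cast n.factorial_ne_zero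
    field_simp
  rw [gC, h]
  push_cast
  rw [Complex.ofReal_log (by positivity)]
  push_cast
  ring

lemma sum_gC (N : ℕ) : ∑ n ∈ Finset.range N, (harmonic n - Real.eulerMascheroniConstant -
      Real.log (n + 1) + 1 / (2 * (n + 1)) : ℝ) =
    (N + 1 / 2) * harmonic N - N - Real.eulerMascheroniConstant * N - Real.log N.factorial := by
  induction N with
  | zero => simp
  | succ N ih =>
    rw [Finset.sum_range_succ, ih, harmonic_succ, Nat.factorial_succ]
    push_cast
    rw [Real.log_mul (by positivity) (by positivity)]
    have : (N : ℝ) + 1 ≠ 0 := by positivity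
    field_simp
    ring

lemma T_one : T 1 = ((1 / 2 + Real.eulerMascheroniConstant / 2 - Real.log (2 * Real.pi) / 2 : ℝ) : ℂ) := by
  have h1 : (1 : ℂ) ∈ Complex.slitPlane := by simp
  have hs : HasSum (fun n : ℕ => gC ((n : ℂ) + 1)) (T 1) := by
    have := (kC_summable h1).prod
    have h2 := this.hasSum
    rw [← (kC_summable h1).tsum_prod] at h2
    convert! h2 using 2 with n
    rw [gC_eq]
    · simp
    · simpa using slit_add h1 (s := n) (by positivity) |> fun h => by rwa [add_comm] at h
  have ht := hs.tendsto_sum_nat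
  simp_rw [gC_nat] at ht
  simp_rw [← Complex.ofReal_sum, sum_gC] at ht
  refine tendsto_nhds_unique ((tendsto_add_atTop_iff_nat 1).2 ht) ?_
  refine (Complex.continuous_ofReal.tendsto _).comp ?_
  let g : ℕ → ℝ := fun n => harmonic n - Real.eulerMascheroniConstant - Real.log (n + 1) + 1 / (2 * (n + 1))
  have hg : Tendsto (fun n : ℕ => ((n : ℝ) + 1) * g n) atTop (𝓝 0) := by
    obtain ⟨C, hC⟩ := gC_nat_bound
    apply squeeze_zero_norm (a := fun n : ℕ => C * ((n : ℝ) + 1) ^ (-(1 / 2) : ℝ))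
    · intro n
      have := hC n
      rw [gC_nat, Complex.norm_real] at this
      rw [norm_mul, Real.norm_of_nonneg (by positivity)]
      calc _ ≤ ((n : ℝ) + 1) * (C * (1 / ((n : ℝ) + 1) ^ (3 / 2 : ℝ))) := by gcongr
        _ = C * (((n : ℝ) + 1) ^ (1 : ℝ) / ((n : ℝ) + 1) ^ (3 / 2 : ℝ)) := by rw [Real.rpow_one]; ring
        _ = _ := by rw [← Real.rpow_sub (by positivity)]; norm_num
    · have h2 := (tendsto_rpow_neg_atTop (y := 1 / 2) (by norm_num)).comp
        (tendsto_atTop_add_const_right atTop (1 : ℝ) tendsto_natCast_atTop_atTop)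
      simpa [Function.comp_def] using h2.const_mul C
  have hi : Tendsto (fun n : ℕ => 1 / ((n : ℝ) + 1)) atTop (𝓝 0) :=
    tendsto_one_div_add_atTop_nhds_zero_nat
  have hst : Tendsto (fun n : ℕ => Real.log (Stirling.stirlingSeq (n + 1))) atTop (𝓝 (Real.log (√Real.pi))) :=
    ((Real.continuousAt_log (by positivity)).tendsto).comp
      ((tendsto_add_atTop_iff_nat 1).2 Stirling.tendsto_stirlingSeq_sqrt_pi)
  have hlim := ((((hg.mul (hi.const_mul (1 / 2) |>.const_add 1)).add
    (hi.const_mul (1 / 4))).sub hst).add_const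
      (1 / 2 + Real.eulerMascheroniConstant / 2 - Real.log 2 / 2))
  convert! hlim using 1
  · ext n
    rw [Stirling.log_stirlingSeq_formula, Real.log_mul (by norm_num) (by positivity),
      Real.log_div (by positivity) (by positivity), Real.log_exp, harmonic_succ]
    simp only [g]
    push_cast
    field_simp
    ring
  · rw [Real.log_mul (by norm_num) (by positivity), Real.log_sqrt (by positivity)]
    congr 1
    ring

noncomputable def kR (z : ℝ) : ℝ := Real.log (z + 1) - Real.log z - (1 / z + 1 / (z + 1)) / 2

lemma kC_real {z : ℝ} (hz : 0 < z) : kC (z : ℂ) = (kR z : ℂ) := by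
  rw [kC, kR]
  push_cast
  rw [Complex.ofReal_log hz.le, Complex.ofReal_log (by positivity)]
  push_cast
  rfl

noncomputable def qq (t : ℝ) : ℝ := (1 - Real.exp (-t)) / t - (1 + Real.exp (-t)) / 2
noncomputable def vv (t : ℝ) : ℝ := 1 / (Real.exp t - 1)
noncomputable def ww (t : ℝ) : ℝ := 1 / t - 1 / 2 - vv t

lemma qq_neg {t : ℝ} (ht : 0 < t) : qq t < 0 := by
  let p : ℝ → ℝ := fun t => t * (1 + Real.exp (-t)) - 2 * (1 - Real.exp (-t))
  have hp : StrictMonoOn p (Ici 0) := by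
    apply strictMonoOn_of_deriv_pos (convex_Ici 0) (by fun_prop)
    intro s hs
    rw [interior_Ici] at hs
    have hs : 0 < s := hs
    have he : HasDerivAt (fun t : ℝ => Real.exp (-t)) (-Real.exp (-s)) s := by
      simpa using (hasDerivAt_neg s).exp
    have h1 : HasDerivAt p (1 * (1 + Real.exp (-s)) + s * (-Real.exp (-s)) - 2 * (- (-Real.exp (-s)))) s :=
      ((hasDerivAt_id' s).mul (he.const_add 1)).sub ((he.const_sub 1).const_mul 2)
    rw [h1.deriv]
    have h2 : (1 + s) < Real.exp s := by
      have := Real.add_one_lt_exp hs.ne'; linarith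
    have h3 : Real.exp (-s) * Real.exp s = 1 := by rw [← Real.exp_add]; simp
    nlinarith [Real.exp_pos (-s)]
  have := hp (show (0:ℝ) ∈ Ici 0 by simp) (show t ∈ Ici (0:ℝ) from ht.le) ht
  simp only [p] at this
  simp at this
  have e : qq t = - (t * (1 + Real.exp (-t)) - 2 * (1 - Real.exp (-t))) / (2 * t) := by
    unfold qq; field_simp; ring
  rw [e, neg_div, neg_lt_zero]
  apply div_pos _ (by positivity)
  linarith

lemma exp_int {z : ℝ} (hz : 0 < z) : IntegrableOn (fun t => Real.exp (-(z * t))) (Ioi 0) ∧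
    ∫ t in Ioi 0, Real.exp (-(z * t)) = 1 / z := by
  constructor
  · simpa [neg_mul] using integrableOn_exp_mul_Ioi (a := -z) (by linarith) 0
  · have := integral_exp_mul_Ioi (a := -z) (by linarith) 0
    simp [neg_mul] at this
    simpa using this

lemma frul {z : ℝ} (hz : 0 < z) :
    IntegrableOn (fun t => t⁻¹ * (Real.exp (-(z * t)) - Real.exp (-((z + 1) * t)))) (Ioi 0) ∧
    ∫ t in Ioi 0, t⁻¹ * (Real.exp (-(z * t)) - Real.exp (-((z + 1) * t))) =
      Real.log (z + 1) - Real.log z := by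
  have hint : IntegrableOn (fun t => t⁻¹ * (Real.exp (-(z * t)) - Real.exp (-((z + 1) * t)))) (Ioi 0) := by
    refine Integrable.mono' (exp_int hz).1 (by fun_prop) ?_
    refine (ae_restrict_iff' measurableSet_Ioi).2 (Eventually.of_forall (fun t ht => ?_))
    have ht : 0 < t := ht
    have e : Real.exp (-((z + 1) * t)) = Real.exp (-(z * t)) * Real.exp (-t) := by
      rw [← Real.exp_add]; ring_nf
    have h1 : Real.exp (-t) ≤ 1 := by simp [ht.le]
    have h2 := Real.add_one_le_exp (-t)
    have h3 := Real.exp_pos (-(z * t))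
    rw [e, Real.norm_of_nonneg]
    · rw [inv_mul_le_iff₀ ht]; nlinarith
    · apply mul_nonneg (by positivity); nlinarith
  refine ⟨hint, ?_⟩
  have hc : Continuous (fun t : ℝ => Real.exp (-t)) := by fun_prop
  have := Frullani.integral_Ioi_eq (f := fun t : ℝ => Real.exp (-t)) (a := z) (b := z + 1) (L := 1)
    (R := 0) (hc.locallyIntegrable.locallyIntegrableOn _) hz (by linarith)
    (by simpa using (hc.tendsto 0).mono_left nhdsWithin_le_nhds)
    (Real.tendsto_exp_neg_atTop_nhds_zero) (by simpa using hint)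
  simp only [smul_eq_mul, sub_zero, mul_one] at this
  rw [this, Real.log_div (by positivity) (by positivity)]

lemma k_int {z : ℝ} (hz : 0 < z) : IntegrableOn (fun t => Real.exp (-(z * t)) * qq t) (Ioi 0) ∧
    ∫ t in Ioi 0, Real.exp (-(z * t)) * qq t = kR z := by
  have h1 := frul hz
  have h2 := exp_int hz
  have h3 := exp_int (z := z + 1) (by linarith)
  have e : EqOn (fun t => t⁻¹ * (Real.exp (-(z * t)) - Real.exp (-((z + 1) * t))) -
      (Real.exp (-(z * t)) + Real.exp (-((z + 1) * t))) / 2)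
      (fun t => Real.exp (-(z * t)) * qq t) (Ioi 0) := by
    intro t ht
    have e : Real.exp (-((z + 1) * t)) = Real.exp (-(z * t)) * Real.exp (-t) := by
      rw [← Real.exp_add]; ring_nf
    simp only [e, qq]
    ring
  have hi : IntegrableOn (fun t => (Real.exp (-(z * t)) + Real.exp (-((z + 1) * t))) / 2) (Ioi 0) :=
    (h2.1.add h3.1).div_const 2
  constructor
  · exact (h1.1.sub hi).congr_fun e measurableSet_Ioi
  · rw [← setIntegral_congr_fun measurableSet_Ioi e, integral_sub h1.1 hi, h1.2, integral_div,
      integral_add h2.1 h3.1, h2.2, h3.2, kR]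

lemma kR_neg {z : ℝ} (hz : 0 < z) : kR z < 0 := by
  rw [← (k_int hz).2]
  have hpos : 0 < ∫ t in Ioi 0, -(Real.exp (-(z * t)) * qq t) := by
    rw [setIntegral_pos_iff_support_of_nonneg_ae]
    · have : Function.support (fun t => -(Real.exp (-(z * t)) * qq t)) ∩ Ioi 0 = Ioi 0 := by
        apply inter_eq_right.2
        intro t ht
        have := qq_neg ht
        simp [this.ne]
      rw [this]; simp
    · refine (ae_restrict_iff' measurableSet_Ioi).2 (Eventually.of_forall (fun t ht => ?_))
      have := qq_neg ht
      have := Real.exp_pos (-(z * t))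
      simp only [Pi.zero_apply]
      nlinarith
    · exact (k_int hz).1.neg
  rw [integral_neg] at hpos
  linarith

lemma tsum_exp {x t : ℝ} (hx : 0 < x) (ht : 0 < t) :
    HasSum (fun p : ℕ × ℕ => Real.exp (-((((p.1 : ℝ) + 1) * x + p.2) * t)) * qq t)
      (ww t * vv (x * t)) := by
  have h1 : Real.exp (-t) < 1 := by simp [ht]
  have h2 : Real.exp (-(x * t)) < 1 := by simp; positivity
  have g1 := hasSum_geometric_of_lt_one (Real.exp_pos _).le h1
  have g2 := (hasSum_geometric_of_lt_one (Real.exp_pos _).le h2).mul_left (Real.exp (-(x * t)))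
  have g3 := (g2.mul g1 (g2.summable.mul_of_nonneg g1.summable (fun n => by positivity)
    (fun n => by positivity))).mul_right (qq t)
  convert! g3 using 1
  · ext p
    rw [← Real.exp_nat_mul, ← Real.exp_nat_mul, ← Real.exp_add, ← Real.exp_add]
    ring_nf
  · have e1 : 1 < Real.exp t := by simp [ht]
    have e2 : 1 < Real.exp (x * t) := by simp; positivity
    simp only [ww, vv, qq, Real.exp_neg]
    have : Real.exp t - 1 ≠ 0 := by linarith
    have : Real.exp (x * t) - 1 ≠ 0 := by linarith
    field_simp
    ring

lemma kR_summable {x : ℝ} (hx : 0 < x) :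
    Summable (fun p : ℕ × ℕ => kR (((p.1 : ℝ) + 1) * x + p.2)) := by
  have := kC_summable (x := (x : ℂ)) (by simp [hx])
  rw [← Complex.summable_ofReal]
  convert! this using 2 with p
  rw [← kC_real (by positivity)]
  push_cast
  rfl

noncomputable def II (x : ℝ) : ℝ := ∫ t in Ioi 0, ww t * vv (x * t)

lemma II_hasSum {x : ℝ} (hx : 0 < x) :
    HasSum (fun p : ℕ × ℕ => kR (((p.1 : ℝ) + 1) * x + p.2)) (II x) := by
  have hz : ∀ p : ℕ × ℕ, 0 < ((p.1 : ℝ) + 1) * x + p.2 := fun p => by positivity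
  have h := hasSum_integral_of_summable_integral_norm (μ := volume.restrict (Ioi (0 : ℝ)))
    (F := fun (p : ℕ × ℕ) t => Real.exp (-((((p.1 : ℝ) + 1) * x + p.2) * t)) * qq t)
    (fun p => (k_int (hz p)).1) ?_
  · simp only [(k_int (hz _)).2] at h
    convert! h using 1
    apply setIntegral_congr_fun measurableSet_Ioi
    intro t ht
    exact (tsum_exp hx ht).tsum_eq.symm
  · refine (kR_summable hx).neg.congr (fun p => ?_)
    rw [← (k_int (hz p)).2, ← integral_neg]
    apply setIntegral_congr_fun measurableSet_Ioi
    intro t ht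
    have := qq_neg ht
    have := Real.exp_pos (-((((p.1 : ℝ) + 1) * x + p.2) * t))
    simp only
    rw [Real.norm_of_nonpos (by nlinarith)]

lemma II_int {x : ℝ} (hx : 0 < x) : IntegrableOn (fun t => ww t * vv (x * t)) (Ioi 0) := by
  by_contra hn
  have h0 : II x = 0 := integral_undef hn
  have h := II_hasSum hx
  rw [h0] at h
  have h1 := le_hasSum h.neg (0, 0) (fun p _ => by
    have := kR_neg (z := ((p.1 : ℝ) + 1) * x + p.2) (by positivity)
    linarith)
  have := kR_neg (z := x) hx
  simp at h1
  linarith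

lemma T_real {x : ℝ} (hx : 0 < x) : T (x : ℂ) = (II x : ℂ) := by
  have h := Complex.hasSum_ofReal.2 (II_hasSum hx)
  rw [T, ← h.tsum_eq]
  congr 1
  ext p
  rw [← kC_real (by positivity)]
  push_cast
  rfl

lemma P_int {a b : ℝ} (ha : 0 < a) (hb : 0 < b) :
    IntegrableOn (fun t => ww (a * t) * vv (b * t)) (Ioi 0) ∧
    ∫ t in Ioi 0, ww (a * t) * vv (b * t) = II (b / a) / a := by
  have hba : 0 < b / a := by positivity
  have e : (fun t => ww (a * t) * vv (b * t)) =
      fun t => (fun s => ww s * vv (b / a * s)) (a * t) := by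
    ext t
    simp only
    congr 2
    field_simp
  rw [e]
  constructor
  · rw [integrableOn_Ioi_comp_mul_left_iff (f := fun s => ww s * vv (b / a * s)) 0 ha, mul_zero]
    exact II_int hba
  · rw [integral_comp_mul_left_Ioi (fun s => ww s * vv (b / a * s)) 0 ha, mul_zero, II, smul_eq_mul]
    ring

lemma slit_inv {z : ℂ} (hz : z ∈ Complex.slitPlane) : z⁻¹ ∈ Complex.slitPlane := by
  have hp : 0 < Complex.normSq z := Complex.normSq_pos.2 (Complex.slitPlane_ne_zero hz)
  rw [Complex.mem_slitPlane_iff] at hz ⊢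
  rw [Complex.inv_re, Complex.inv_im]
  rcases hz with h | h
  · exact Or.inl (div_pos h hp)
  · exact Or.inr (div_ne_zero (neg_ne_zero.2 h) hp.ne')

noncomputable def LL (u : ℝ) : ℝ := Real.log (1 - Real.exp (-u))
noncomputable def MM (u : ℝ) : ℝ := vv u + LL u / 2
noncomputable def mm (u : ℝ) : ℝ := -(vv u) ^ 2 - vv u / 2

lemma LL_deriv {u : ℝ} (hu : 0 < u) : HasDerivAt LL (vv u) u := by
  have he : HasDerivAt (fun t : ℝ => Real.exp (-t)) (-Real.exp (-u)) u := by
    simpa using (hasDerivAt_neg u).exp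
  have h1 : Real.exp (-u) < 1 := by simp [hu]
  have h2 : 1 < Real.exp u := by simp [hu]
  refine ((he.const_sub 1).log (by linarith)).congr_deriv ?_
  rw [vv]
  have h3 : Real.exp u - 1 ≠ 0 := by linarith
  have h4 : 1 - Real.exp (-u) ≠ 0 := by linarith
  rw [Real.exp_neg] at *
  field_simp

lemma vv_deriv {u : ℝ} (hu : 0 < u) : HasDerivAt vv (-(vv u) ^ 2 - vv u) u := by
  have h2 : 1 < Real.exp u := by simp [hu]
  have h3 : Real.exp u - 1 ≠ 0 := by linarith
  have h := ((Real.hasDerivAt_exp u).sub_const 1).inv h3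
  have e : vv = (fun x => Real.exp x - 1)⁻¹ := by ext; simp [vv]
  rw [e]
  refine h.congr_deriv ?_
  simp only [Pi.inv_apply]
  field_simp
  ring

lemma MM_deriv {u : ℝ} (hu : 0 < u) : HasDerivAt MM (mm u) u := by
  refine ((vv_deriv hu).add ((LL_deriv hu).div_const 2)).congr_deriv ?_
  rw [mm]; ring

lemma LL_lim : Tendsto (fun u => LL u - Real.log u) (𝓝[>] 0) (𝓝 0) := by
  have he : HasDerivAt (fun t : ℝ => 1 - Real.exp (-t)) 1 0 := by
    simpa using ((hasDerivAt_neg (0:ℝ)).exp).const_sub 1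
  have h1 := hasDerivAt_iff_tendsto_slope_zero.1 he
  have h2 : Tendsto (fun u : ℝ => (1 - Real.exp (-u)) / u) (𝓝[>] 0) (𝓝 1) := by
    refine (h1.mono_left (nhdsWithin_mono _ (fun x hx => ne_of_gt hx))).congr (fun u => ?_)
    simp
    ring
  have h3 := (Real.continuousAt_log (one_ne_zero)).tendsto.comp h2
  rw [Real.log_one] at h3
  refine h3.congr' ?_
  filter_upwards [self_mem_nhdsWithin] with u hu
  have hu : 0 < u := hu
  have : Real.exp (-u) < 1 := by simp [hu]
  simp only [Function.comp_def, LL]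
  rw [Real.log_div (by linarith) hu.ne']

lemma vv_lim : Tendsto (fun u => vv u - 1 / u) (𝓝[>] 0) (𝓝 (-(1 / 2))) := by
  have he := Real.hasDerivAt_exp 0
  have h1 := hasDerivAt_iff_tendsto_slope_zero.1 he
  have h2 : Tendsto (fun u : ℝ => (Real.exp u - 1) / u) (𝓝[>] 0) (𝓝 1) := by
    rw [Real.exp_zero] at h1
    refine (h1.mono_left (nhdsWithin_mono _ (fun x hx => ne_of_gt hx))).congr (fun u => ?_)
    simp
    ring
  have h3 : Tendsto (fun u : ℝ => (Real.exp u - 1 - u) / u ^ 2) (𝓝[>] 0) (𝓝 (1 / 2)) := by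
    rw [tendsto_iff_norm_sub_tendsto_zero]
    have hid : Tendsto (fun u : ℝ => u) (𝓝[>] 0) (𝓝 0) := nhdsWithin_le_nhds
    refine squeeze_zero' (Eventually.of_forall (fun _ => norm_nonneg _)) ?_ hid
    have : Ioo (0:ℝ) 1 ∈ 𝓝[>] (0:ℝ) := Ioo_mem_nhdsGT one_pos
    filter_upwards [this] with u hu
    have hb := Real.exp_bound (x := u) (by rw [abs_of_pos hu.1]; exact hu.2.le) (n := 3) (by norm_num)
    simp [Finset.sum_range_succ, Nat.factorial, abs_of_pos hu.1] at hb
    have hu0 := hu.1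
    have e : (Real.exp u - 1 - u) / u ^ 2 - 1 / 2 = (Real.exp u - (1 + u + u ^ 2 / 2)) / u ^ 2 := by
      field_simp; ring
    rw [e, norm_div, Real.norm_eq_abs, Real.norm_of_nonneg (by positivity), div_le_iff₀ (by positivity)]
    refine hb.trans ?_
    have : 0 < u ^ 3 := by positivity
    norm_num
    nlinarith
  have h4 := (h3.div h2 one_ne_zero).neg
  simp only [div_one] at h4
  refine h4.congr' ?_
  filter_upwards [self_mem_nhdsWithin] with u hu
  have hu : 0 < u := hu
  have h2 : 1 < Real.exp u := by simp [hu]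
  have h3 : Real.exp u - 1 ≠ 0 := by linarith
  simp only [vv, Pi.div_apply]
  field_simp
  ring

noncomputable def QQ (x t : ℝ) : ℝ := -(1 / 2) * MM (x * t) + 1 / 2 * MM ((x + 1) * t) +
  1 / (x + 1) * MM (2 * x * t) - 1 / (2 * (x + 1)) * LL ((x + 1) * t)

noncomputable def QQ' (x t : ℝ) : ℝ := -(x / 2) * mm (x * t) + (x + 1) / 2 * mm ((x + 1) * t) +
  2 * x / (x + 1) * mm (2 * x * t) - 1 / 2 * vv ((x + 1) * t)

noncomputable def QQ0 (x : ℝ) : ℝ := -(1 / (2 * (x + 1))) - Real.log x / 4 + Real.log (x + 1) / 4 +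
  (Real.log (2 * x) - Real.log (x + 1)) / (2 * (x + 1))

lemma QQ_deriv {x t : ℝ} (hx : 0 < x) (ht : 0 < t) : HasDerivAt (QQ x) (QQ' x t) t := by
  have hm : ∀ a : ℝ, HasDerivAt (fun t : ℝ => a * t) a t := fun a => by
    simpa using (hasDerivAt_id' t).const_mul a
  have h1 := (MM_deriv (u := x * t) (by positivity)).comp t (hm x)
  have h2 := (MM_deriv (u := (x + 1) * t) (by positivity)).comp t (hm (x + 1))
  have h3 := (MM_deriv (u := 2 * x * t) (by positivity)).comp t (hm (2 * x))
  have h4 := (LL_deriv (u := (x + 1) * t) (by positivity)).comp t (hm (x + 1))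
  have h5 := (((h1.const_mul (-(1 / 2))).add (h2.const_mul (1 / 2))).add
    (h3.const_mul (1 / (x + 1)))).sub (h4.const_mul (1 / (2 * (x + 1))))
  refine HasDerivAt.congr_deriv (show HasDerivAt (QQ x) _ t from h5) ?_
  rw [QQ']
  field_simp

lemma scale_lim {a : ℝ} (ha : 0 < a) : Tendsto (fun t => a * t) (𝓝[>] 0) (𝓝[>] 0) := by
  refine tendsto_nhdsWithin_iff.2 ⟨?_, ?_⟩
  · have : Tendsto (fun t : ℝ => a * t) (𝓝 0) (𝓝 (a * 0)) := (continuous_const_mul a).tendsto 0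
    rw [mul_zero] at this
    exact this.mono_left nhdsWithin_le_nhds
  · filter_upwards [self_mem_nhdsWithin] with u hu
    exact mul_pos ha hu

lemma QQ_lim0 {x : ℝ} (hx : 0 < x) : Tendsto (QQ x) (𝓝[>] 0) (𝓝 (QQ0 x)) := by
  have hv : ∀ a : ℝ, 0 < a → _ := fun a ha => vv_lim.comp (scale_lim ha)
  have hl : ∀ a : ℝ, 0 < a → _ := fun a ha => LL_lim.comp (scale_lim ha)
  have hM : ∀ a : ℝ, 0 < a → _ := fun a ha => (hv a ha).add ((hl a ha).div_const 2)
  have h := (((((hM x hx).const_mul (-(1 / 2))).add ((hM (x + 1) (by positivity)).const_mul (1 / 2))).add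
    ((hM (2 * x) (by positivity)).const_mul (1 / (x + 1)))).sub
      ((hl (x + 1) (by positivity)).const_mul (1 / (2 * (x + 1))))).add_const
    (QQ0 x + 1 / (2 * (x + 1)))
  have e : (-(1 / 2) * (-(1 / 2) + 0 / 2) + 1 / 2 * (-(1 / 2) + 0 / 2) + 1 / (x + 1) * (-(1 / 2) + 0 / 2) -
      1 / (2 * (x + 1)) * 0) + (QQ0 x + 1 / (2 * (x + 1))) = QQ0 x := by
    field_simp; ring
  rw [e] at h
  refine h.congr' ?_
  filter_upwards [self_mem_nhdsWithin] with t ht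
  have ht : 0 < t := ht
  simp only [Function.comp_def, QQ, MM, QQ0]
  rw [Real.log_mul hx.ne' ht.ne', Real.log_mul (by positivity : x + 1 ≠ 0) ht.ne',
    Real.log_mul (by positivity : 2 * x ≠ 0) ht.ne']
  field_simp
  ring

lemma vv_top : Tendsto vv atTop (𝓝 0) := by
  have h : Tendsto (fun u => Real.exp u - 1) atTop atTop :=
    tendsto_atTop_add_const_right _ (-1) Real.tendsto_exp_atTop
  have e : vv = (fun u => Real.exp u - 1)⁻¹ := by
    ext u
    simp [vv]
  rw [e]
  exact h.inv_tendsto_atTop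

lemma LL_top : Tendsto LL atTop (𝓝 0) := by
  have h := Real.tendsto_exp_neg_atTop_nhds_zero.const_sub 1
  rw [sub_zero] at h
  have h3 := (Real.continuousAt_log (one_ne_zero)).tendsto.comp h
  rw [Real.log_one] at h3
  exact h3

lemma QQ_top {x : ℝ} (hx : 0 < x) : Tendsto (QQ x) atTop (𝓝 0) := by
  have hs : ∀ a : ℝ, 0 < a → Tendsto (fun t : ℝ => a * t) atTop atTop := fun a ha =>
    tendsto_id.const_mul_atTop ha
  have hl : ∀ a : ℝ, 0 < a → _ := fun a ha => LL_top.comp (hs a ha)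
  have hM : ∀ a : ℝ, 0 < a → _ := fun a ha =>
    (vv_top.comp (hs a ha)).add ((hl a ha).div_const 2)
  have h := ((((hM x hx).const_mul (-(1 / 2))).add ((hM (x + 1) (by positivity)).const_mul (1 / 2))).add
    ((hM (2 * x) (by positivity)).const_mul (1 / (x + 1)))).sub
      ((hl (x + 1) (by positivity)).const_mul (1 / (2 * (x + 1))))
  simp only [zero_div, add_zero, mul_zero, sub_zero] at h
  exact h

lemma QQ_integral {x : ℝ} (hx : 0 < x) (hi : IntegrableOn (QQ' x) (Ioi 0)) :
    ∫ t in Ioi 0, QQ' x t = -QQ0 x := by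
  have h := integral_Ioi_of_hasDerivAt_of_tendsto (a := 0) (f := Function.update (QQ x) 0 (QQ0 x))
    (f' := QQ' x) (m := 0) ?_ (fun t ht => ?_) hi ?_
  · rw [h]; simp
  · rw [continuousWithinAt_update_same]
    have : Ici (0 : ℝ) \ {0} = Ioi 0 := by
      ext t; simp [lt_iff_le_and_ne, eq_comm]
    rw [this]
    exact QQ_lim0 hx
  · refine (QQ_deriv hx ht).congr_of_eventuallyEq ?_
    filter_upwards [eventually_ne_nhds (ne_of_gt ht)] with s hs
    simp [hs]
  · refine (QQ_top hx).congr' ?_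
    filter_upwards [eventually_ne_atTop 0] with s hs
    simp [hs]

lemma alg_id (A B x t : ℝ) (hA : 0 < A) (hB : 0 < B) (hx : 0 < x) (ht : 0 < t) :
    let A2 := A ^ 2 / (1 + 2 * A)
    let B2 := B ^ 2 / (1 + 2 * B)
    let C := A * B / (1 + A + B)
    (1 / t - 1 / 2 - A) * B - (1 / t - 1 / 2 - A) * B2 - (1 / (2 * t) - 1 / 2 - A2) * B
      - (1 / (2 * t) - 1 / 2 - A2) * C - (1 / ((x + 1) * t) - 1 / 2 - C) * B2
      + 2 * ((1 / (2 * t) - 1 / 2 - A2) * B2)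
      - x / 2 * ((1 / (x * t) - 1 / 2 - B) * B) + (x + 1) / 2 * ((1 / ((x + 1) * t) - 1 / 2 - C) * C)
      + 2 * x / (x + 1) * ((1 / (2 * x * t) - 1 / 2 - B2) * B2)
    = -(x / 2) * (-B ^ 2 - B / 2) + (x + 1) / 2 * (-C ^ 2 - C / 2) +
      2 * x / (x + 1) * (-B2 ^ 2 - B2 / 2) - 1 / 2 * C := by
  intro A2 B2 C
  have h1 : (-A - 1/2) * B - (- 1 / 2 - A) * B2 - (- 1 / 2 - A2) * B - (- 1 / 2 - A2) * C - (- 1 / 2 - C) * B2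
      + 2 * ((- 1 / 2 - A2) * B2) = - 1 / 2 * C := by
    simp only [A2, B2, C]
    field_simp
    ring
  have h2 : 1 / t * B - 1 / t * B2 - (1 / (2 * t)) * B
      - (1 / (2 * t)) * C - (1 / ((x + 1) * t)) * B2
      + 2 * ((1 / (2 * t)) * B2)
      - x / 2 * ((1 / (x * t)) * B) + (x + 1) / 2 * ((1 / ((x + 1) * t)) * C)
      + 2 * x / (x + 1) * ((1 / (2 * x * t)) * B2) = 0 := by
    field_simp
    ring
  linear_combination h1 + h2

lemma point_id {x t : ℝ} (hx : 0 < x) (ht : 0 < t) :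
    2 * (ww (1 * t) * vv (x * t)) - ww (1 * t) * vv (2 * x * t) - ww (2 * t) * vv (x * t)
      - ww (2 * t) * vv ((x + 1) * t) - ww ((x + 1) * t) * vv (2 * x * t)
      - ww (1 * t) * vv (x * t) + 2 * (ww (2 * t) * vv (2 * x * t))
      - x / 2 * (ww (x * t) * vv (x * t)) + (x + 1) / 2 * (ww ((x + 1) * t) * vv ((x + 1) * t))
      + 2 * x / (x + 1) * (ww (2 * x * t) * vv (2 * x * t)) = QQ' x t := by
  have ha : 1 < Real.exp t := by simp [ht]
  have hb : 1 < Real.exp (x * t) := by simp; positivity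
  have e2 : vv (2 * t) = vv t ^ 2 / (1 + 2 * vv t) := by
    have : Real.exp (2 * t) = Real.exp t ^ 2 := by rw [← Real.exp_nat_mul]; norm_num
    simp only [vv, this]
    generalize Real.exp t = a at *
    have h1 : a - 1 ≠ 0 := by linarith
    have h2 : a ^ 2 - 1 ≠ 0 := by nlinarith
    have h3 : a + 1 ≠ 0 := by linarith
    have h4 : 1 + 2 * (1 / (a - 1)) = (a + 1) / (a - 1) := by field_simp; ring
    rw [h4]; field_simp; ring
  have e3 : vv (2 * x * t) = vv (x * t) ^ 2 / (1 + 2 * vv (x * t)) := by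
    have : Real.exp (2 * x * t) = Real.exp (x * t) ^ 2 := by
      rw [← Real.exp_nat_mul]; push_cast; ring_nf
    simp only [vv, this]
    generalize Real.exp (x * t) = a at *
    have h1 : a - 1 ≠ 0 := by linarith
    have h2 : a ^ 2 - 1 ≠ 0 := by nlinarith
    have h3 : a + 1 ≠ 0 := by linarith
    have h4 : 1 + 2 * (1 / (a - 1)) = (a + 1) / (a - 1) := by field_simp; ring
    rw [h4]; field_simp; ring
  have e4 : vv ((x + 1) * t) = vv t * vv (x * t) / (1 + vv t + vv (x * t)) := by
    have : Real.exp ((x + 1) * t) = Real.exp t * Real.exp (x * t) := by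
      rw [← Real.exp_add]; ring_nf
    simp only [vv, this]
    generalize Real.exp (x * t) = b at *
    generalize Real.exp t = a at *
    have h1 : a - 1 ≠ 0 := by linarith
    have h2 : b - 1 ≠ 0 := by linarith
    have h3 : a * b - 1 ≠ 0 := by nlinarith
    have h4 : 1 + 1 / (a - 1) + 1 / (b - 1) = (a * b - 1) / ((a - 1) * (b - 1)) := by
      field_simp; ring
    rw [h4]; field_simp
  have hA : 0 < vv t := by unfold vv; apply one_div_pos.2; linarith
  have hB : 0 < vv (x * t) := by unfold vv; apply one_div_pos.2; linarith
  have := alg_id (vv t) (vv (x * t)) x t hA hB hx ht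
  simp only [← e2, ← e3, ← e4] at this
  simp only [QQ', mm, ww, one_mul]
  rw [← this]
  ring

lemma II_rel {x : ℝ} (hx : 0 < x) :
    2 * II x - II (2 * x) - 1 / 2 * II (x / 2) - 1 / 2 * II ((x + 1) / 2)
      - 1 / (x + 1) * II (2 * x / (x + 1)) = -(1 / (x + 1)) * II 1 - QQ0 x := by
  have h1 := P_int one_pos hx
  have h2 := P_int one_pos (b := 2 * x) (by positivity)
  have h3 := P_int two_pos hx
  have h4 := P_int two_pos (b := x + 1) (by positivity)
  have h5 := P_int (a := x + 1) (b := 2 * x) (by positivity) (by positivity)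
  have h6 := P_int two_pos (b := 2 * x) (by positivity)
  have h7 := P_int hx hx
  have h8 := P_int (a := x + 1) (b := x + 1) (by positivity) (by positivity)
  have h9 := P_int (a := 2 * x) (b := 2 * x) (by positivity) (by positivity)
  have i1 := h1.1.const_mul 2
  have i2 := i1.sub h2.1
  have i3 := i2.sub h3.1
  have i4 := i3.sub h4.1
  have i5 := i4.sub h5.1
  have i6 := i5.sub h1.1
  have i7 := i6.add (h6.1.const_mul 2)
  have i8 := i7.sub (h7.1.const_mul (x / 2))
  have i9 := i8.add (h8.1.const_mul ((x + 1) / 2))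
  have i10 := i9.add (h9.1.const_mul (2 * x / (x + 1)))
  have hi : IntegrableOn (QQ' x) (Ioi 0) :=
    IntegrableOn.congr_fun i10 (fun t ht => point_id hx ht) measurableSet_Ioi
  have hQ := QQ_integral hx hi
  rw [← setIntegral_congr_fun measurableSet_Ioi (fun t ht => point_id hx ht)] at hQ
  erw [integral_add i9 (h9.1.const_mul (2 * x / (x + 1))),
    integral_add i8 (h8.1.const_mul ((x + 1) / 2)),
    integral_sub i7 (h7.1.const_mul (x / 2)),
    integral_add i6 (h6.1.const_mul 2), integral_sub i5 h1.1, integral_sub i4 h5.1,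
    integral_sub i3 h4.1, integral_sub i2 h3.1, integral_sub i1 h2.1] at hQ
  simp only [integral_const_mul] at hQ
  rw [h1.2, h2.2, h3.2, h4.2, h5.2, h6.2, h7.2, h8.2, h9.2] at hQ
  rw [div_self hx.ne', div_self (by positivity : x + 1 ≠ 0), div_self (by positivity : 2 * x ≠ 0),
    mul_div_cancel_left₀ x two_ne_zero] at hQ
  simp only [div_one] at hQ
  have k1 : x / 2 * (II 1 / x) = II 1 / 2 := by field_simp
  have k2 : (x + 1) / 2 * (II 1 / (x + 1)) = II 1 / 2 := by field_simp
  have k3 : 2 * x / (x + 1) * (II 1 / (2 * x)) = 1 / (x + 1) * II 1 := by field_simp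
  rw [k1, k2, k3] at hQ
  linear_combination hQ

lemma F1_real {x : ℝ} (hx : 0 < x) : F1 (x : ℂ) =
    ((II x - 1 / 2 * (Real.eulerMascheroniConstant - Real.log (2 * Real.pi) + Real.log x) : ℝ) : ℂ) := by
  have h : (2 * Real.pi / x : ℂ) = ((2 * Real.pi / x : ℝ) : ℂ) := by push_cast; rfl
  rw [F1, S1_eq (by simp [hx]), T_real hx, h, ← Complex.ofReal_log (by positivity),
    Real.log_div (by positivity) hx.ne']
  push_cast
  ring

lemma II_one : II 1 = 1 / 2 + Real.eulerMascheroniConstant / 2 - Real.log (2 * Real.pi) / 2 := by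
  have h := T_real one_pos
  rw [Complex.ofReal_one, T_one] at h
  exact_mod_cast h.symm

lemma real_case {x : ℝ} (hx : 0 < x) :
    2 * F1 x - F1 (2 * x) - (1 / 2) * F1 (x / 2) - (1 / 2) * F1 ((x + 1) / 2) -
      (1 / (x + 1)) * F1 (2 * x / (x + 1)) = 0 := by
  have c1 : (2 * x : ℂ) = ((2 * x : ℝ) : ℂ) := by push_cast; rfl
  have c2 : (x / 2 : ℂ) = ((x / 2 : ℝ) : ℂ) := by push_cast; rfl
  have c3 : ((x + 1) / 2 : ℂ) = (((x + 1) / 2 : ℝ) : ℂ) := by push_cast; rfl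
  have c4 : (2 * x / (x + 1) : ℂ) = ((2 * x / (x + 1) : ℝ) : ℂ) := by push_cast; rfl
  have c5 : (1 / (x + 1) : ℂ) = ((1 / (x + 1) : ℝ) : ℂ) := by push_cast; rfl
  have c6 : (1 / 2 : ℂ) = ((1 / 2 : ℝ) : ℂ) := by push_cast; rfl
  rw [c4, c3, c2, c1, c5, c6, F1_real hx, F1_real (by positivity), F1_real (by positivity),
    F1_real (by positivity), F1_real (by positivity)]
  have h := II_rel hx
  rw [II_one, QQ0] at h
  have l1 : Real.log (2 * x) = Real.log 2 + Real.log x := Real.log_mul two_ne_zero hx.ne'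
  have l2 : Real.log (x / 2) = Real.log x - Real.log 2 := Real.log_div hx.ne' two_ne_zero
  have l3 : Real.log ((x + 1) / 2) = Real.log (x + 1) - Real.log 2 :=
    Real.log_div (by positivity) two_ne_zero
  have l4 : Real.log (2 * x / (x + 1)) = Real.log 2 + Real.log x - Real.log (x + 1) := by
    rw [Real.log_div (by positivity) (by positivity), l1]
  have i1 : 1 / (2 * (x + 1)) = 1 / 2 * (1 / (x + 1)) := by field_simp
  rw [i1, l1, div_eq_mul_one_div (Real.log 2 + Real.log x - Real.log (x + 1)), i1] at h
  rw [l1, l2, l3, l4]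
  have h2 : 2 * (2 : ℂ) = 4 := by norm_num
  norm_cast
  linear_combination h

lemma F1_diff : DifferentiableOn ℂ F1 Complex.slitPlane := by
  have h1 : DifferentiableOn ℂ S1 Complex.slitPlane := T_diff.congr (fun x hx => S1_eq hx)
  have h2 : DifferentiableOn ℂ (fun x : ℂ => (1 / 2 : ℂ) * ((Real.eulerMascheroniConstant : ℂ) -
      Complex.log (2 * Real.pi / x))) Complex.slitPlane := by
    intro x hx
    have h0 := Complex.slitPlane_ne_zero hx
    have hm : 2 * (Real.pi : ℂ) / x ∈ Complex.slitPlane := by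
      have h3 := cone_mem (slit_inv hx) (a := 2 * Real.pi) (b := 0)
        (by positivity) le_rfl
      simpa [div_eq_mul_inv] using h3
    have h4 : DifferentiableAt ℂ (fun x : ℂ => 2 * (Real.pi : ℂ) / x) x := by
      fun_prop (disch := assumption)
    exact ((h4.clog hm).const_sub _ |>.const_mul _).differentiableWithinAt
  exact h1.sub h2

theorem ramanujan_five_term_relation (x : ℂ) (hx : x ∈ Complex.slitPlane) :
    2 * F1 x - F1 (2 * x) - (1 / 2) * F1 (x / 2) - (1 / 2) * F1 ((x + 1) / 2) -
      (1 / (x + 1)) * F1 (2 * x / (x + 1)) = 0 := by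
  have hF : ∀ z ∈ Complex.slitPlane, DifferentiableAt ℂ F1 z := fun z hz =>
    F1_diff.differentiableAt (Complex.isOpen_slitPlane.mem_nhds hz)
  refine slit_identity (f := fun x => 2 * F1 x - F1 (2 * x) - (1 / 2) * F1 (x / 2) -
    (1 / 2) * F1 ((x + 1) / 2) - (1 / (x + 1)) * F1 (2 * x / (x + 1))) (g := fun _ => 0)
    ?_ (differentiableOn_const _) (fun y hy => real_case hy) hx
  intro z hz
  have hz0 := Complex.slitPlane_ne_zero hz
  have m1 : z + 1 ∈ Complex.slitPlane := by simpa using slit_add hz zero_le_one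
  have hz1 := Complex.slitPlane_ne_zero m1
  have m2 : 2 * z ∈ Complex.slitPlane := by
    simpa using cone_mem hz (a := 2) (b := 0) (by positivity) le_rfl
  have m3 : z / 2 ∈ Complex.slitPlane := by
    have := cone_mem hz (a := 1 / 2) (b := 0) (by positivity) le_rfl
    convert! this using 1; push_cast; ring
  have m4 : (z + 1) / 2 ∈ Complex.slitPlane := by
    have := cone_mem m1 (a := 1 / 2) (b := 0) (by positivity) le_rfl
    convert! this using 1; push_cast; ring
  have m5 : 2 * z / (z + 1) ∈ Complex.slitPlane := by
    have := cone_mem (slit_inv hz) (a := 1 / 2) (b := 1 / 2) (by positivity)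
      (by positivity)
    have := slit_inv this
    convert! this using 1
    have e : ((1 / 2 : ℝ) : ℂ) * z⁻¹ + ((1 / 2 : ℝ) : ℂ) = (z + 1) / (2 * z) := by
      push_cast; field_simp; ring
    rw [e, inv_div]
  have d1 := hF z hz
  have d2 := DifferentiableAt.comp (g := F1) (f := fun z : ℂ => 2 * z) z (hF _ m2) (by fun_prop)
  have d3 := DifferentiableAt.comp (g := F1) (f := fun z : ℂ => z / 2) z (hF _ m3) (by fun_prop)
  have d4 := DifferentiableAt.comp (g := F1) (f := fun z : ℂ => (z + 1) / 2) z (hF _ m4) (by fun_prop)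
  have d5 := DifferentiableAt.comp (g := F1) (f := fun z : ℂ => 2 * z / (z + 1)) z (hF _ m5)
    (by fun_prop (disch := assumption))
  have d6 : DifferentiableAt ℂ (fun z : ℂ => 1 / (z + 1)) z := by fun_prop (disch := assumption)
  exact (((((d1.const_mul 2).sub d2).sub (d3.const_mul (1 / 2))).sub (d4.const_mul (1 / 2))).sub
    (d6.mul d5)).differentiableWithinAt
end

section
/- For τ in the upper half plane ℍ, 𝓢₁(−τ) − 𝓢₁(τ) = ∑_{n≥1} (π·cot(πnτ) + iπ) = −2πi ∑_{n≥1} ∑_{m≥1} e^{2πimnτ}. -/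
open MeasureTheory Set

open Filter Topology

noncomputable def gAux (z : ℂ) : ℂ := digammaC z - Complex.log z + 1 / (2 * z)

noncomputable def hAux (w : ℂ) : ℂ := (1 / w + 1 / (w + 1)) / 2 - Complex.log (1 + 1 / w)

lemma hAux_bound {w : ℂ} (hw : 2 ≤ ‖w‖) : ‖hAux w‖ ≤ 2 * (‖w‖⁻¹) ^ 3 := by
  have hw0 : w ≠ 0 := by
    rintro rfl
    norm_num at hw
  have hw1 : 1 ≤ ‖w + 1‖ := by
    have := norm_sub_le (w + 1) 1
    simp at this
    linarith
  have hw1' : w + 1 ≠ 0 := by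
    intro h
    rw [h] at hw1
    norm_num at hw1
  have hu : ‖1 / w‖ = ‖w‖⁻¹ := by simp
  have hu2 : ‖w‖⁻¹ ≤ 1 / 2 := by
    rw [one_div]
    exact inv_anti₀ (by norm_num) hw
  have hT := Complex.norm_log_sub_logTaylor_le 2 (z := 1 / w) (by rw [hu]; linarith)
  have hL : Complex.logTaylor (2 + 1) (1 / w) = 1 / w - (1 / w) ^ 2 / 2 := by
    simp [Complex.logTaylor_succ, Complex.logTaylor_zero]
    ring
  rw [hL, hu] at hT
  have e : hAux w = -(Complex.log (1 + 1 / w) - (1 / w - (1 / w) ^ 2 / 2))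
      + (1 / w) ^ 2 / (2 * (w + 1)) := by
    unfold hAux
    field_simp
    ring
  have h2 : ‖(1 / w) ^ 2 / (2 * (w + 1))‖ ≤ (‖w‖⁻¹) ^ 3 := by
    rw [norm_div, norm_pow, hu, norm_mul]
    have h3 : ‖w‖ ≤ ‖(2 : ℂ)‖ * ‖w + 1‖ := by
      have := norm_sub_le (w + 1) 1
      simp at this ⊢
      linarith
    rw [pow_succ (‖w‖⁻¹) 2, div_eq_mul_inv]
    gcongr
  have h4 : ‖w‖⁻¹ ^ (2 + 1) * (1 - ‖w‖⁻¹)⁻¹ / ((2 : ℕ) + 1) ≤ (‖w‖⁻¹) ^ 3 := by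
    have h5 : (1 - ‖w‖⁻¹)⁻¹ ≤ 2 := by
      rw [inv_le_comm₀ (by linarith) (by norm_num)]
      linarith
    have h6 : 0 ≤ ‖w‖⁻¹ ^ 3 := by positivity
    have h7 := mul_le_mul_of_nonneg_left h5 h6
    norm_num only
    linarith
  rw [e]
  refine (norm_add_le _ _).trans ?_
  rw [norm_neg]
  linarith

lemma ne_neg_nat {z : ℂ} (hz : z.im ≠ 0 ∨ 0 < z.re) (m : ℕ) : z ≠ -m := by
  rintro rfl
  rcases hz with h | h
  · simp at h
  · simp at h
    have : (0 : ℝ) ≤ m := by positivity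
    linarith

lemma digammaC_add_one {z : ℂ} (hz : z.im ≠ 0 ∨ 0 < z.re) :
    digammaC (z + 1) = digammaC z + z⁻¹ :=
  Complex.digamma_apply_add_one z (ne_neg_nat hz)

lemma gAux_step {w : ℂ} (hw : 0 < w.im ∨ 0 < w.re) : gAux (w + 1) - gAux w = hAux w := by
  have hw' : w.im ≠ 0 ∨ 0 < w.re := hw.imp ne_of_gt id
  have hw0 : w ≠ 0 := by simpa using ne_neg_nat hw' 0
  have hw1 : w + 1 ≠ 0 := by
    intro h
    exact ne_neg_nat hw' 1 (by rw [eq_neg_of_add_eq_zero_left h]; simp)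
  have hv : (1 + 1 / w) ≠ 0 := by
    intro h
    apply hw1
    have h' : w + 1 = w * (1 + 1 / w) := by field_simp
    rw [h', h, mul_zero]
  have hlog : Complex.log (w + 1) = Complex.log w + Complex.log (1 + 1 / w) := by
    rw [← (Complex.log_mul_eq_add_log_iff hw0 hv).2]
    · congr 1
      field_simp
    · rcases hw with h | h
      · have h1 : 0 < w.arg := by
          rcases (Complex.arg_nonneg_iff.2 h.le).lt_or_eq with h' | h'
          · exact h'
          · have := (Complex.arg_eq_zero_iff.1 h'.symm).2
            linarith
        have h2 : (1 + 1 / w).arg < 0 := by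
          rw [Complex.arg_neg_iff]
          simp [Complex.inv_im]
          exact div_neg_of_neg_of_pos (by linarith) (Complex.normSq_pos.2 hw0)
        have h3 := Complex.neg_pi_lt_arg (1 + 1 / w)
        have h4 := Complex.arg_le_pi w
        exact ⟨by linarith, by linarith⟩
      · have h1 := Complex.abs_arg_lt_pi_div_two_iff.2 (Or.inl h)
        have h2 : |(1 + 1 / w).arg| < Real.pi / 2 := by
          refine Complex.abs_arg_lt_pi_div_two_iff.2 (Or.inl ?_)
          simp [Complex.inv_re]
          have := div_pos h (Complex.normSq_pos.2 hw0)
          linarith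
        rw [abs_lt] at h1 h2
        exact ⟨by linarith [h1.1, h2.1], by linarith [h1.2, h2.2]⟩
  unfold gAux hAux
  rw [hlog, digammaC_add_one hw']
  generalize Complex.log (1 + 1 / w) = L
  field_simp
  ring

lemma gAux_eq_of {z : ℂ} (hz : 0 < z.im ∨ 0 < z.re)
    (hs : Summable fun k : ℕ => hAux (z + k))
    (hl : Tendsto (fun N : ℕ => gAux (z + N)) atTop (𝓝 0)) :
    gAux z = -∑' k : ℕ, hAux (z + k) := by
  have h1 : ∀ N : ℕ, ∑ k ∈ Finset.range N, hAux (z + k) = gAux (z + N) - gAux z := by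
    intro N
    have : ∀ k : ℕ, hAux (z + k) = gAux (z + (k + 1 : ℕ)) - gAux (z + k) := by
      intro k
      rw [← gAux_step]
      · push_cast
        rw [add_assoc]
      · refine hz.imp (fun h => by simpa using h) (fun h => ?_)
        simp
        positivity
    rw [Finset.sum_congr rfl (fun k _ => this k), Finset.sum_range_sub (fun k : ℕ => gAux (z + k))]
    simp
  have h2 := hs.hasSum.tendsto_sum_nat
  simp_rw [h1] at h2
  have h3 := tendsto_nhds_unique h2 (hl.sub_const (gAux z))
  rw [h3]
  ring

lemma digammaC_real_s13 {x : ℝ} (hx : 2 < x) :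
    ‖digammaC x - Complex.log x‖ ≤ 1 / (x - 1) := by
  have hd : DifferentiableAt ℝ Real.Gamma x :=
    Real.differentiableAt_Gamma (fun m => by have : (0:ℝ) ≤ m := by positivity
                                             linarith)
  have hG := Real.Gamma_pos_of_pos (show 0 < x by linarith)
  have hdl : HasDerivAt (Real.log ∘ Real.Gamma) (deriv Real.Gamma x / Real.Gamma x) x :=
    hd.hasDerivAt.log hG.ne'
  have hfe : ∀ y : ℝ, 0 < y → Real.log (Real.Gamma (y + 1)) = Real.log y + Real.log (Real.Gamma y) := by
    intro y hy
    rw [Real.Gamma_add_one hy.ne', Real.log_mul hy.ne' (Real.Gamma_pos_of_pos hy).ne']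
  have up := Real.convexOn_log_Gamma.le_slope_of_hasDerivAt (x := x) (y := x + 1)
    (by simp; linarith) (by simp; linarith) (by linarith) hdl
  have lo := Real.convexOn_log_Gamma.slope_le_of_hasDerivAt (x := x - 1) (y := x)
    (by simp; linarith) (by simp; linarith) (by linarith) hdl
  have e1 := hfe x (by linarith)
  have e2 := hfe (x - 1) (by linarith)
  rw [sub_add_cancel] at e2
  simp only [slope_def_field, Function.comp] at up lo
  rw [e1] at up
  rw [e2] at lo
  norm_num at up lo
  have hc : digammaC x = ((deriv Real.Gamma x / Real.Gamma x : ℝ) : ℂ) := by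
    unfold digammaC
    have hC : HasDerivAt Complex.Gamma (deriv Complex.Gamma x) (x : ℂ) :=
      (Complex.differentiableAt_Gamma x (ne_neg_nat (Or.inr (by simp; linarith)))).hasDerivAt
    have h1 := hC.comp_ofReal
    have h2 : HasDerivAt (fun y : ℝ => Complex.Gamma y) ((deriv Real.Gamma x : ℝ) : ℂ) x := by
      simp_rw [Complex.Gamma_ofReal]
      exact hd.hasDerivAt.ofReal_comp
    rw [h1.unique h2, Complex.Gamma_ofReal]
    push_cast
    rfl
  rw [hc, ← Complex.ofReal_log (by linarith), ← Complex.ofReal_sub, Complex.norm_real,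
    Real.norm_eq_abs, abs_le]
  have h5 : Real.log x - Real.log (x - 1) ≤ 1 / (x - 1) := by
    rw [← Real.log_div (by linarith) (by linarith)]
    refine (Real.log_le_sub_one_of_pos (div_pos (by linarith) (by linarith))).trans (le_of_eq ?_)
    have : x - 1 ≠ 0 := by linarith
    field_simp
    ring
  have h6 : 0 < 1 / (x - 1) := one_div_pos.2 (by linarith)
  constructor <;> linarith

lemma gAux_real_tendsto {x : ℝ} (hx : 2 < x) :
    Tendsto (fun N : ℕ => gAux ((x : ℂ) + N)) atTop (𝓝 0) := by
  have hN : Tendsto (fun N : ℕ => x + (N : ℝ)) atTop atTop :=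
    tendsto_atTop_add_const_left _ _ tendsto_natCast_atTop_atTop
  have h1 : Tendsto (fun y : ℝ => 2 / (y - 1)) atTop (𝓝 0) :=
    Tendsto.div_atTop tendsto_const_nhds (tendsto_atTop_add_const_right _ (-1) tendsto_id)
  refine squeeze_zero_norm (fun N => ?_) (h1.comp hN)
  have hy : 2 < x + (N : ℝ) := by
    have : (0 : ℝ) ≤ N := by positivity
    linarith
  have e : ((x : ℂ) + N) = ((x + N : ℝ) : ℂ) := by push_cast; rfl
  rw [e]
  simp only [Function.comp]
  generalize x + (N : ℝ) = y at *
  unfold gAux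
  refine (norm_add_le _ _).trans ?_
  have h2 : ‖1 / (2 * (y : ℂ))‖ ≤ 1 / (y - 1) := by
    simp only [norm_div, norm_one, norm_mul, Complex.norm_real, Real.norm_eq_abs, Complex.norm_ofNat]
    rw [abs_of_pos (by linarith)]
    apply one_div_le_one_div_of_le <;> linarith
  have := digammaC_real_s13 hy
  have e3 : 2 / (y - 1) = 1 / (y - 1) + 1 / (y - 1) := by ring
  linarith

lemma norm_add_nat_ge {z : ℂ} (hz : 2 < z.re) (k : ℕ) : (k : ℝ) + 2 ≤ ‖z + k‖ := by
  have := Complex.re_le_norm (z + k)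
  simp at this
  linarith

lemma hAux_bound_re {z : ℂ} (hz : 2 < z.re) (k : ℕ) :
    ‖hAux (z + k)‖ ≤ 2 * (((k : ℝ) + 2)⁻¹) ^ 3 := by
  have h := norm_add_nat_ge hz k
  have hk : (0 : ℝ) ≤ k := by positivity
  refine (hAux_bound (by linarith)).trans ?_
  gcongr

lemma summable_aux : Summable fun k : ℕ => 2 * (((k : ℝ) + 2)⁻¹) ^ 3 := by
  have h := (summable_nat_add_iff 2).2 (Real.summable_nat_pow_inv.2 (show 1 < 3 by norm_num))
  refine (h.mul_left 2).congr (fun k => ?_)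
  push_cast
  rw [inv_pow]

lemma differentiableAt_digammaC {z : ℂ} (hz : 0 < z.re) : DifferentiableAt ℂ digammaC z := by
  have hO : IsOpen {z : ℂ | 0 < z.re} := isOpen_lt continuous_const Complex.continuous_re
  have hG : DifferentiableOn ℂ Complex.Gamma {z : ℂ | 0 < z.re} := fun w hw =>
    (Complex.differentiableAt_Gamma w (ne_neg_nat (Or.inr hw))).differentiableWithinAt
  exact ((hG.deriv hO).differentiableAt (hO.mem_nhds hz)).div
    (hG.differentiableAt (hO.mem_nhds hz)) (Complex.Gamma_ne_zero_of_re_pos hz)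

lemma gAux_eq_re {z : ℂ} (hz : 2 < z.re) : gAux z = -∑' k : ℕ, hAux (z + k) := by
  set U : Set ℂ := {z : ℂ | 2 < z.re} with hU
  have hO : IsOpen U := isOpen_lt continuous_const Complex.continuous_re
  have hconv : Convex ℝ U := convex_halfSpace_re_gt 2
  have hg : DifferentiableOn ℂ gAux U := by
    intro w hw
    have hw' : 2 < w.re := hw
    have hw0 : w ≠ 0 := by
      rintro rfl
      norm_num at hw'
    apply DifferentiableAt.differentiableWithinAt
    unfold gAux
    refine ((differentiableAt_digammaC (by linarith)).sub
      (Complex.differentiableAt_log (Or.inl (by linarith)))).add ?_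
    exact (differentiableAt_const _).div (by fun_prop) (by simpa using hw0)
  have hh : DifferentiableOn ℂ (fun z => -∑' k : ℕ, hAux (z + k)) U := by
    refine DifferentiableOn.neg ?_
    refine Complex.differentiableOn_tsum_of_summable_norm summable_aux (fun k w hw => ?_) hO
      (fun k w hw => hAux_bound_re hw k)
    have hw' : 2 < w.re := hw
    have hk : (0 : ℝ) ≤ k := by positivity
    apply DifferentiableAt.differentiableWithinAt
    have h1 : w + k ≠ 0 := by
      intro h
      have := congrArg Complex.re h
      simp at this
      linarith
    have h2 : w + k + 1 ≠ 0 := by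
      intro h
      have := congrArg Complex.re h
      simp at this
      linarith
    have h3 : 1 + 1 / (w + k) ∈ Complex.slitPlane := by
      left
      simp [Complex.inv_re]
      have : 0 < (w.re + k) / Complex.normSq (w + k) :=
        div_pos (by linarith) (Complex.normSq_pos.2 h1)
      linarith
    unfold hAux
    fun_prop (disch := assumption)
  have hz₀ : (3 : ℂ) ∈ U := by simp [hU]; norm_num
  refine AnalyticOnNhd.eqOn_of_preconnected_of_frequently_eq (hg.analyticOnNhd hO)
    (hh.analyticOnNhd hO) hconv.isPreconnected hz₀ ?_ hz
  have hseq : Tendsto (fun n : ℕ => ((3 + 1 / ((n : ℝ) + 1) : ℝ) : ℂ)) atTop (𝓝[≠] (3 : ℂ)) := by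
    refine tendsto_nhdsWithin_iff.2 ⟨?_, Eventually.of_forall fun n => ?_⟩
    · have h1 : Tendsto (fun n : ℕ => (3 + 1 / ((n : ℝ) + 1))) atTop (𝓝 (3 + 0)) :=
        tendsto_one_div_add_atTop_nhds_zero_nat.const_add 3
      rw [add_zero] at h1
      have := (Complex.continuous_ofReal.tendsto 3).comp h1
      simpa [Function.comp_def] using this
    · have : (0 : ℝ) < 1 / ((n : ℝ) + 1) := by positivity
      intro h
      have h' := congrArg Complex.re (Set.mem_singleton_iff.1 h)
      rw [Complex.ofReal_re] at h'
      norm_num at h'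
      linarith
  refine hseq.frequently (Frequently.of_forall fun n => ?_)
  have : (0 : ℝ) < 1 / ((n : ℝ) + 1) := by positivity
  have hx : 2 < 3 + 1 / ((n : ℝ) + 1) := by linarith
  refine gAux_eq_of (Or.inr (by rw [Complex.ofReal_re]; linarith)) ?_ (gAux_real_tendsto hx)
  exact Summable.of_norm_bounded summable_aux (fun k => hAux_bound_re (by rw [Complex.ofReal_re]; exact hx) k)

lemma gAux_eq_im {z : ℂ} (hz : 0 < z.im) (hs : Summable fun k : ℕ => hAux (z + k)) :
    gAux z = -∑' k : ℕ, hAux (z + k) := by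
  refine gAux_eq_of (Or.inl hz) hs ?_
  have h1 := (tendsto_sum_nat_add (fun k : ℕ => hAux (z + k))).neg
  rw [neg_zero] at h1
  refine h1.congr' ?_
  have h2 : ∀ᶠ N : ℕ in atTop, 2 - z.re < N :=
    tendsto_natCast_atTop_atTop.eventually (eventually_gt_atTop (2 - z.re))
  filter_upwards [h2] with N hN
  rw [gAux_eq_re (z := z + N) (by simp; linarith)]
  congr 2
  ext k
  push_cast
  ring_nf

lemma summable_S1 {τ : ℂ} (hτ : 0 < τ.im) : Summable fun n : ℕ => gAux ((n + 1) * τ) := by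
  have h0 := EisensteinSeries.summable_norm_eisSummand (k := 3) le_rfl ⟨τ, hτ⟩
  have h1 : Summable fun p : ℕ × ℕ => 2 * (‖((p.1 : ℂ) + 1) * τ + p.2‖⁻¹) ^ 3 := by
    have hinj : Function.Injective (fun p : ℕ × ℕ => (![(p.1 : ℤ) + 1, (p.2 : ℤ)] : Fin 2 → ℤ)) := by
      intro p q h
      have a := congrFun h 0
      have b := congrFun h 1
      simp at a b
      exact Prod.ext a b
    refine ((h0.comp_injective hinj).mul_left 2).congr fun p => ?_
    simp [EisensteinSeries.eisSummand]
  have h2 := h1.prod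
  refine Summable.of_norm_bounded_eventually h2 ?_
  rw [Nat.cofinite_eq_atTop]
  have h3 : ∀ᶠ n : ℕ in atTop, 2 / τ.im < n :=
    tendsto_natCast_atTop_atTop.eventually (eventually_gt_atTop (2 / τ.im))
  filter_upwards [h3] with n hn
  rw [div_lt_iff₀ hτ] at hn
  have him : (((n : ℂ) + 1) * τ).im = (n + 1) * τ.im := by simp
  have hb : ∀ k : ℕ, ‖hAux (((n : ℂ) + 1) * τ + k)‖ ≤ 2 * (‖((n : ℂ) + 1) * τ + k‖⁻¹) ^ 3 := by
    intro k
    apply hAux_bound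
    have := Complex.im_le_norm (((n : ℂ) + 1) * τ + k)
    rw [Complex.add_im, him, Complex.natCast_im] at this
    linarith
  have hs : Summable fun k : ℕ => 2 * (‖((n : ℂ) + 1) * τ + k‖⁻¹) ^ 3 := h1.prod_factor n
  rw [gAux_eq_im (by rw [him]; positivity) (Summable.of_norm_bounded hs hb), norm_neg]
  exact tsum_of_norm_bounded hs.hasSum hb

lemma sin_ne {z : ℂ} (hz : z.im ≠ 0) : Complex.sin (Real.pi * z) ≠ 0 := by
  rw [Complex.sin_ne_zero_iff]
  intro k h
  have hp : (Real.pi : ℂ) ≠ 0 := by exact_mod_cast Real.pi_ne_zero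
  rw [mul_comm] at h
  have := mul_right_cancel₀ hp h
  rw [this] at hz
  simp at hz

lemma digammaC_reflection {z : ℂ} (hz : z.im ≠ 0) :
    digammaC (-z) - digammaC z - 1 / z = Real.pi * Complex.cot (Real.pi * z) := by
  have hz1 : (1 - z).im ≠ 0 := by simpa using hz
  have d1 := Complex.differentiableAt_Gamma z (ne_neg_nat (Or.inl hz))
  have d2 := Complex.differentiableAt_Gamma (1 - z) (ne_neg_nat (Or.inl hz1))
  have n1 := Complex.Gamma_ne_zero (ne_neg_nat (Or.inl hz))
  have n2 := Complex.Gamma_ne_zero (ne_neg_nat (Or.inl hz1))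
  have hs := sin_ne hz
  have D1 : HasDerivAt (fun w => Complex.Gamma w * Complex.Gamma (1 - w))
      (deriv Complex.Gamma z * Complex.Gamma (1 - z) +
        Complex.Gamma z * (deriv Complex.Gamma (1 - z) * (-1))) z := by
    refine d1.hasDerivAt.mul ?_
    exact d2.hasDerivAt.comp z ((hasDerivAt_id z).const_sub 1)
  have D2 : HasDerivAt (fun w => (Real.pi : ℂ) / Complex.sin (Real.pi * w))
      (-(Real.pi * (Complex.cos (Real.pi * z) * Real.pi)) / Complex.sin (Real.pi * z) ^ 2) z := by
    have h1 : HasDerivAt (fun w => Complex.sin (Real.pi * w))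
        (Complex.cos (Real.pi * z) * Real.pi) z := by
      refine (Complex.hasDerivAt_sin _).comp z ?_
      simpa using (hasDerivAt_id z).const_mul (Real.pi : ℂ)
    have h2 := (hasDerivAt_const z (Real.pi : ℂ)).div h1 hs
    rw [zero_mul, zero_sub] at h2
    exact h2
  simp_rw [Complex.Gamma_mul_Gamma_one_sub] at D1
  have E := D1.unique D2
  have R := Complex.Gamma_mul_Gamma_one_sub z
  have hm : digammaC (1 - z) = digammaC (-z) - 1 / z := by
    have := digammaC_add_one (z := -z) (Or.inl (by simpa using hz))
    rw [show (1 - z) = -z + 1 by ring, this, inv_neg, one_div, sub_eq_add_neg]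
  have key : digammaC (1 - z) - digammaC z = Real.pi * Complex.cot (Real.pi * z) := by
    unfold digammaC Complex.cot
    have hp : (Real.pi : ℂ) ≠ 0 := by exact_mod_cast Real.pi_ne_zero
    have hprod : Complex.Gamma z * Complex.Gamma (1 - z) ≠ 0 := mul_ne_zero n1 n2
    have : deriv Complex.Gamma (1 - z) / Complex.Gamma (1 - z) - deriv Complex.Gamma z / Complex.Gamma z
        = -(deriv Complex.Gamma z * Complex.Gamma (1 - z) +
        Complex.Gamma z * (deriv Complex.Gamma (1 - z) * (-1))) /
          (Complex.Gamma z * Complex.Gamma (1 - z)) := by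
      field_simp
      ring
    rw [this, E, R]
    field_simp
  rw [← key, hm]
  ring

lemma gAux_reflection {z : ℂ} (hz : 0 < z.im) :
    gAux (-z) - gAux z = Real.pi * Complex.cot (Real.pi * z) + Real.pi * Complex.I := by
  have hz0 : z ≠ 0 := by
    rintro rfl
    simp at hz
  have hl : Complex.log (-z) = Complex.log z - Real.pi * Complex.I := by
    unfold Complex.log
    rw [norm_neg, Complex.arg_neg_eq_arg_sub_pi_of_im_pos hz]
    push_cast
    ring
  rw [← digammaC_reflection hz.ne']
  unfold gAux
  rw [hl]
  field_simp
  ring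

lemma cot_eq {z : ℂ} (hz : 0 < z.im) :
    (Real.pi : ℂ) * Complex.cot (Real.pi * z) + Real.pi * Complex.I =
      -2 * Real.pi * Complex.I * ∑' m : ℕ, Complex.exp (2 * Real.pi * Complex.I * z) ^ (m + 1) := by
  have h := pi_mul_cot_pi_q_exp ⟨z, hz⟩
  have hq : ‖Complex.exp (2 * Real.pi * Complex.I * z)‖ < 1 := by
    simpa using UpperHalfPlane.norm_exp_two_pi_I_lt_one ⟨z, hz⟩
  have hs := (summable_geometric_of_norm_lt_one hq).tsum_eq_zero_add
  simp only at h
  rw [h, hs]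
  ring

lemma cot_summable {τ : ℂ} (hτ : 0 < τ.im) : Summable fun n : ℕ =>
    ∑' m : ℕ, Complex.exp (2 * Real.pi * Complex.I * ((n + 1) * τ)) ^ (m + 1) := by
  have hq : ‖Complex.exp (2 * Real.pi * Complex.I * τ)‖ < 1 := by
    simpa using UpperHalfPlane.norm_exp_two_pi_I_lt_one ⟨τ, hτ⟩
  set q := Complex.exp (2 * Real.pi * Complex.I * τ) with hqd
  have hg := summable_geometric_of_lt_one (norm_nonneg q) hq
  have hp : Summable fun p : ℕ × ℕ => ‖q‖ ^ p.1 * ‖q‖ ^ p.2 :=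
    hg.mul_of_nonneg hg (fun _ => by positivity) (fun _ => by positivity)
  have hp2 : Summable fun p : ℕ × ℕ =>
      Complex.exp (2 * Real.pi * Complex.I * ((p.1 + 1) * τ)) ^ (p.2 + 1) := by
    refine Summable.of_norm_bounded hp fun p => ?_
    have : Complex.exp (2 * Real.pi * Complex.I * ((p.1 + 1) * τ)) = q ^ (p.1 + 1) := by
      rw [hqd, ← Complex.exp_nat_mul]
      congr 1
      push_cast
      ring
    rw [this, ← pow_mul, norm_pow, ← pow_add]
    exact pow_le_pow_of_le_one (norm_nonneg q) hq.le (by nlinarith)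
  exact hp2.prod

theorem S1_reflection (τ : ℂ) (hτ : 0 < τ.im) :
    S1 (-τ) - S1 τ =
        (∑' n : ℕ, ((Real.pi : ℂ) * Complex.cot (Real.pi * (n + 1) * τ) +
          Real.pi * Complex.I)) ∧
      S1 (-τ) - S1 τ =
        -2 * Real.pi * Complex.I *
          ∑' n : ℕ, ∑' m : ℕ,
            Complex.exp (2 * Real.pi * Complex.I * (m + 1) * (n + 1) * τ) := by
  have hS : ∀ x : ℂ, S1 x = ∑' n : ℕ, gAux ((n + 1) * x) := by
    intro x
    unfold S1 gAux
    simp_rw [mul_assoc]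
  have him : ∀ n : ℕ, 0 < (((n : ℂ) + 1) * τ).im := by
    intro n
    have : (((n : ℂ) + 1) * τ).im = (n + 1) * τ.im := by simp
    rw [this]
    positivity
  have hr : ∀ n : ℕ, gAux ((n + 1) * -τ) = gAux ((n + 1) * τ) +
      -2 * Real.pi * Complex.I *
        ∑' m : ℕ, Complex.exp (2 * Real.pi * Complex.I * ((n + 1) * τ)) ^ (m + 1) := by
    intro n
    rw [← cot_eq (him n), ← gAux_reflection (him n), mul_neg]
    ring
  have main : S1 (-τ) - S1 τ = -2 * Real.pi * Complex.I * ∑' n : ℕ,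
      ∑' m : ℕ, Complex.exp (2 * Real.pi * Complex.I * ((n + 1) * τ)) ^ (m + 1) := by
    rw [hS, hS]
    simp_rw [hr]
    rw [(summable_S1 hτ).tsum_add ((cot_summable hτ).mul_left _), tsum_mul_left]
    ring
  constructor
  · rw [main, ← tsum_mul_left]
    refine tsum_congr fun n => ?_
    rw [← cot_eq (him n), mul_assoc (Real.pi : ℂ)]
  · rw [main]
    congr 1
    refine tsum_congr fun n => tsum_congr fun m => ?_
    rw [← Complex.exp_nat_mul]
    congr 1
    push_cast
    ring
end
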